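/- Let W_2 be the 4×4 matrix with rows (1,1,0,−1), (0,0,1,0), (0,0,1,0), (0,0,1,0), and let Z_{w,2} = Σ_{i,j} [W_2]_{ij} Π_i⊗Π_j (first Bell projector on qubits A'B', second on A''B''). Then Z_{w,2} is an entanglement witness for the partition A=(A',A''), B=(B',B''): tr(Z_{w,2} ρ) ≥ 0 for every 16×16 matrix ρ that is separable across this partition. -/

import Mathlib

open Matrix Complex
open scoped Kronecker ComplexOrder

noncomputable section
namespace Paper

abbrev Q2 := Fin 2 × Fin 2
abbrev M4 := Matrix Q2 Q2 ℂ
abbrev M16 := Matrix (Q2 × Q2) (Q2 × Q2) ℂ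

/-- `1/√2` as a complex number. -/
def invSqrt2 : ℂ := ((Real.sqrt 2)⁻¹ : ℝ)

/-- The four Bell states `|Φ₁⟩,…,|Φ₄⟩` as vectors in `ℂ²⊗ℂ²`
(product basis indexed by `Fin 2 × Fin 2`). -/
def bell : Fin 4 → Q2 → ℂ :=
  ![fun p => !![invSqrt2, 0; 0, invSqrt2] p.1 p.2,
    fun p => !![invSqrt2, 0; 0, -invSqrt2] p.1 p.2,
    fun p => !![0, invSqrt2; invSqrt2, 0] p.1 p.2,
    fun p => !![0, invSqrt2; -invSqrt2, 0] p.1 p.2]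

/-- The Bell projectors `Π_i = |Φ_i⟩⟨Φ_i|`. -/
def BellProj (i : Fin 4) : M4 := vecMulVec (bell i) (star (bell i))

/-- The Pauli matrices `σ_x, σ_y, σ_z`. -/
def pauli : Fin 3 → Matrix (Fin 2) (Fin 2) ℂ :=
  ![!![0, 1; 1, 0], !![0, -I; I, 0], !![1, 0; 0, -1]]

/-- Reindexing `((a',b'),(a'',b'')) ↦ ((a',a''),(b',b''))`. -/
def swapMid : (Q2 × Q2) ≃ (Q2 × Q2) where
  toFun p := ((p.1.1, p.2.1), (p.1.2, p.2.2))
  invFun p := ((p.1.1, p.2.1), (p.1.2, p.2.2))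
  left_inv _ := rfl
  right_inv _ := rfl

/-- The rank-one matrix `x x†`. -/
def pureMat {d : Type*} (x : d → ℂ) : Matrix d d ℂ := vecMulVec x (star x)

/-- Separability of a 16×16 four-qubit matrix (qubit order A',B',A'',B'')
across the partition A = (A',A''), B = (B',B''). -/
def SepAB (ρ : M16) : Prop :=
  ∃ (n : ℕ) (x y : Fin n → Q2 → ℂ),
    (Matrix.reindex swapMid swapMid ρ) = ∑ k, (pureMat (x k)) ⊗ₖ (pureMat (y k))


/-- The witness matrix `W2`. -/
def W2 : Matrix (Fin 4) (Fin 4) ℝ :=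
  !![1, 1, 0, -1; 0, 0, 1, 0; 0, 0, 1, 0; 0, 0, 1, 0]

/-!
Read the coefficients of product vectors `x`, `y` as `2 × 2` matrices `X`, `Y`. The amplitude
`a i j` of `x ⊗ y` on `Φ i ⊗ Φ j` is then the `i`-th Bell coordinate of `X * B j * Yᵀ`, where `B j`
is the coefficient matrix of `Φ j`. In Bell coordinates `2 * det` is a diagonal quadratic form with
signs `η`, so multiplicativity of `det` gives `∑ i, η i * η j * a i j ^ 2 = det X * det Y` for every
column `j`, and likewise for every row. Weighting rows by `α` and columns by `-β` with
`∑ α = ∑ β` yields `∑ (α i - β j) * η i * η j * a i j ^ 2 = 0`, and the triangle inequality bounds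
each single term by the sum of the others. For `W2` take row `0` minus column `2`, and bound the
entry `(0, 3)`.
-/

/-- The tensor product of two vectors, in the index order of the Kronecker product. -/
def tensorVec {d e : Type*} (x : d → ℂ) (y : e → ℂ) : d × e → ℂ := fun p => x p.1 * y p.2

/-- The coefficients of a bipartite vector arranged as a matrix, rows indexed by the first
factor. -/
def coeffMatrix {d e : Type*} (x : d × e → ℂ) : Matrix d e ℂ := of fun a b => x (a, b)

/-- The amplitude of the `A`-`B` product vector `x ⊗ y` on the Bell pair `Φ i ⊗ Φ j`. Composing with
`swapMid` brings `x ⊗ y` into the qubit order of `Φ i ⊗ Φ j`. -/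
def bellAmp (i j : Fin 4) (x y : Q2 → ℂ) : ℂ :=
  star (tensorVec (bell i) (bell j)) ⬝ᵥ (tensorVec x y ∘ swapMid)

/-- The signs of the diagonal quadratic form `2 * det` in the Bell basis. -/
def bellSign : Fin 4 → ℝ := ![1, -1, -1, 1]

/-- The matrix of squared Bell amplitudes of `x ⊗ y`, signed so that all its row and column sums
agree. -/
def signedAmpSq (x y : Q2 → ℂ) : Matrix (Fin 4) (Fin 4) ℂ :=
  of fun i j => bellSign i * bellSign j * bellAmp i j x y ^ 2

section Triangle

variable {ι E : Type*} [Fintype ι]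

lemma norm_le_sum_erase_norm_of_sum_eq_zero [DecidableEq ι] [SeminormedAddCommGroup E]
    {f : ι → E} (hf : ∑ k, f k = 0) (p : ι) :
    ‖f p‖ ≤ ∑ k ∈ Finset.univ.erase p, ‖f k‖ := by
  rw [← Finset.add_sum_erase _ f (Finset.mem_univ p)] at hf
  rw [eq_neg_of_add_eq_zero_left hf, norm_neg]
  exact norm_sum_le _ _

lemma sum_mul_norm_nonneg_of_sum_smul_eq_zero [SeminormedAddCommGroup E] [NormedSpace ℝ E]
    {q w : ι → ℝ} {z : ι → E} (hq : ∑ k, q k • z k = 0) (p : ι)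
    (hw : ∀ k ≠ p, |q k| ≤ w k) (hp : -|q p| ≤ w p) : 0 ≤ ∑ k, w k * ‖z k‖ := by
  classical
  have triangle := norm_le_sum_erase_norm_of_sum_eq_zero hq p
  simp only [norm_smul, Real.norm_eq_abs] at triangle
  calc 0 ≤ -|q p| * ‖z p‖ + ∑ k ∈ Finset.univ.erase p, |q k| * ‖z k‖ := by linarith
    _ ≤ w p * ‖z p‖ + ∑ k ∈ Finset.univ.erase p, w k * ‖z k‖ := by
      gcongr with k hk
      exact hw k (Finset.ne_of_mem_erase hk)
    _ = ∑ k, w k * ‖z k‖ := Finset.add_sum_erase _ (fun k => w k * ‖z k‖) (Finset.mem_univ p)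

end Triangle

lemma sum_sub_mul_eq_of_row_sum_eq_of_col_sum_eq {m n R : Type*} [Fintype m] [Fintype n]
    [CommRing R] {S : Matrix m n R} {D : R} (hrow : ∀ i, ∑ j, S i j = D)
    (hcol : ∀ j, ∑ i, S i j = D) (α : m → R) (β : n → R) :
    ∑ i, ∑ j, (α i - β j) * S i j = (∑ i, α i - ∑ j, β j) * D := by
  simp only [sub_mul, Finset.sum_sub_distrib, Finset.sum_mul]
  congr 1
  · simp only [← Finset.mul_sum, hrow]
  · rw [Finset.sum_comm]
    simp only [← Finset.mul_sum, hcol]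

section PureMat

variable {d e : Type*}

lemma pureMat_kronecker_pureMat (x : d → ℂ) (y : e → ℂ) :
    pureMat x ⊗ₖ pureMat y = pureMat (tensorVec x y) := by
  ext p q
  simp only [pureMat, tensorVec, kroneckerMap_apply, vecMulVec_apply, Pi.star_apply, star_mul']
  ring

lemma trace_pureMat_mul_pureMat [Fintype d] (u v : d → ℂ) :
    (pureMat u * pureMat v).trace = ((‖star u ⬝ᵥ v‖ ^ 2 : ℝ) : ℂ) := by
  have conj_overlap : u ⬝ᵥ star v = star (star u ⬝ᵥ v) := by
    rw [star_dotProduct, star_star, dotProduct_comm]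
  rw [pureMat, pureMat, vecMulVec_mul_vecMulVec, trace_vecMulVec, dotProduct_smul, conj_overlap,
    smul_eq_mul, ofReal_pow]
  exact Complex.mul_conj' _

end PureMat

lemma SepAB.exists_eq_sum_pureMat {ρ : M16} (hρ : SepAB ρ) :
    ∃ (n : ℕ) (x y : Fin n → Q2 → ℂ), ρ = ∑ k, pureMat (tensorVec (x k) (y k) ∘ swapMid) := by
  obtain ⟨n, x, y, hxy⟩ := hρ
  refine ⟨n, x, y, ?_⟩
  simp only [pureMat_kronecker_pureMat] at hxy
  ext p q
  simpa [Matrix.sum_apply, pureMat, vecMulVec_apply] using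
    congrFun₂ hxy (swapMid p) (swapMid q)

lemma trace_sum_smul_bellProj_mul_pureMat (W : Matrix (Fin 4) (Fin 4) ℝ) (x y : Q2 → ℂ) :
    ((∑ i, ∑ j, (W i j : ℂ) • (BellProj i ⊗ₖ BellProj j)) *
      pureMat (tensorVec x y ∘ swapMid)).trace =
      ((∑ i, ∑ j, W i j * ‖bellAmp i j x y‖ ^ 2 : ℝ) : ℂ) := by
  have bellProj_eq (i : Fin 4) : BellProj i = pureMat (bell i) := rfl
  simp only [bellProj_eq, pureMat_kronecker_pureMat, Finset.sum_mul, smul_mul_assoc, trace_sum,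
    trace_smul, trace_pureMat_mul_pureMat, smul_eq_mul, bellAmp, ofReal_sum, ofReal_mul]

lemma invSqrt2_sq : invSqrt2 ^ 2 = 1 / 2 := by
  rw [invSqrt2, ← ofReal_pow, inv_pow, Real.sq_sqrt zero_le_two]
  norm_num

lemma conj_invSqrt2 : (starRingEnd ℂ) invSqrt2 = invSqrt2 := conj_ofReal _

lemma bellSign_mul_self (i : Fin 4) : (bellSign i : ℂ) * bellSign i = 1 := by
  fin_cases i <;> simp [bellSign]

lemma norm_bellSign (i : Fin 4) : ‖(bellSign i : ℂ)‖ = 1 := by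
  fin_cases i <;> simp [bellSign]

lemma det_coeffMatrix_bell (i : Fin 4) : (coeffMatrix (bell i)).det = bellSign i / 2 := by
  fin_cases i <;>
    simp [coeffMatrix, bell, bellSign, det_fin_two, ← pow_two, invSqrt2_sq, neg_div]

lemma sum_bellSign_mul_trace_sq (M : Matrix (Fin 2) (Fin 2) ℂ) :
    ∑ i, (bellSign i : ℂ) * ((coeffMatrix (bell i))ᴴ * M).trace ^ 2 = 2 * M.det := by
  have bell_coords : (fun i => ((coeffMatrix (bell i))ᴴ * M).trace) =
      ![invSqrt2 * (M 0 0 + M 1 1), invSqrt2 * (M 0 0 - M 1 1),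
        invSqrt2 * (M 0 1 + M 1 0), invSqrt2 * (M 0 1 - M 1 0)] := by
    funext i
    fin_cases i <;> simp [coeffMatrix, bell, trace_fin_two, mul_apply, conj_invSqrt2] <;> ring
  calc ∑ i, (bellSign i : ℂ) * ((coeffMatrix (bell i))ᴴ * M).trace ^ 2
      = 4 * invSqrt2 ^ 2 * (M 0 0 * M 1 1 - M 0 1 * M 1 0) := by
        simp only [funext_iff.1 bell_coords, Fin.sum_univ_four, bellSign, Matrix.cons_val,
          ofReal_one, ofReal_neg]
        ring
    _ = 2 * M.det := by
        rw [invSqrt2_sq, det_fin_two]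
        ring

lemma star_tensorVec_dotProduct_eq_trace (u v x y : Q2 → ℂ) :
    star (tensorVec u v) ⬝ᵥ (tensorVec x y ∘ swapMid) =
      ((coeffMatrix u)ᴴ * (coeffMatrix x * (coeffMatrix v)ᴴᵀ * (coeffMatrix y)ᵀ)).trace := by
  simp only [tensorVec, swapMid, coeffMatrix, dotProduct, Fintype.sum_prod_type, trace_fin_two,
    mul_apply, Fin.sum_univ_two, Pi.star_apply, star_mul', Function.comp_apply, Equiv.coe_fn_mk,
    conjTranspose_apply, transpose_apply, of_apply]
  ring

lemma star_tensorVec_dotProduct_eq_trace_transpose (u v x y : Q2 → ℂ) :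
    star (tensorVec u v) ⬝ᵥ (tensorVec x y ∘ swapMid) =
      ((coeffMatrix v)ᴴ * ((coeffMatrix x)ᵀ * (coeffMatrix u)ᴴᵀ * coeffMatrix y)).trace := by
  rw [star_tensorVec_dotProduct_eq_trace, ← trace_transpose]
  simp only [transpose_mul, transpose_transpose, Matrix.mul_assoc]
  rw [trace_mul_comm]
  simp only [Matrix.mul_assoc]

lemma two_mul_det_mul_bell_mul (X Y : Matrix (Fin 2) (Fin 2) ℂ) (i : Fin 4) :
    2 * (X * (coeffMatrix (bell i))ᴴᵀ * Y).det = bellSign i * (X.det * Y.det) := by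
  have det_bell : ((coeffMatrix (bell i))ᴴᵀ).det = bellSign i / 2 := by
    simp [det_conjTranspose, det_coeffMatrix_bell]
  rw [det_mul, det_mul, det_bell]
  ring

lemma col_sum_signedAmpSq (x y : Q2 → ℂ) (j : Fin 4) :
    ∑ i, signedAmpSq x y i j = (coeffMatrix x).det * (coeffMatrix y).det :=
  calc ∑ i, signedAmpSq x y i j
      = bellSign j * ∑ i, (bellSign i : ℂ) * bellAmp i j x y ^ 2 := by
        rw [Finset.mul_sum]
        exact Finset.sum_congr rfl fun i _ => by rw [signedAmpSq, of_apply]; ring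
    _ = bellSign j * (bellSign j * ((coeffMatrix x).det * (coeffMatrix y).det)) := by
        simp only [bellAmp, star_tensorVec_dotProduct_eq_trace, sum_bellSign_mul_trace_sq,
          two_mul_det_mul_bell_mul, det_transpose]
    _ = (coeffMatrix x).det * (coeffMatrix y).det := by
        rw [← mul_assoc, bellSign_mul_self, one_mul]

lemma row_sum_signedAmpSq (x y : Q2 → ℂ) (i : Fin 4) :
    ∑ j, signedAmpSq x y i j = (coeffMatrix x).det * (coeffMatrix y).det :=
  calc ∑ j, signedAmpSq x y i j
      = bellSign i * ∑ j, (bellSign j : ℂ) * bellAmp i j x y ^ 2 := by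
        simp only [signedAmpSq, of_apply, Finset.mul_sum, mul_assoc]
    _ = bellSign i * (bellSign i * ((coeffMatrix x).det * (coeffMatrix y).det)) := by
        simp only [bellAmp, star_tensorVec_dotProduct_eq_trace_transpose,
          sum_bellSign_mul_trace_sq, two_mul_det_mul_bell_mul, det_transpose]
    _ = (coeffMatrix x).det * (coeffMatrix y).det := by
        rw [← mul_assoc, bellSign_mul_self, one_mul]

lemma norm_signedAmpSq (x y : Q2 → ℂ) (i j : Fin 4) :
    ‖signedAmpSq x y i j‖ = ‖bellAmp i j x y‖ ^ 2 := by
  simp only [signedAmpSq, of_apply, norm_mul, norm_bellSign, norm_pow, one_mul]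

section Weights

variable {α β : Fin 4 → ℝ} {W : Matrix (Fin 4) (Fin 4) ℝ} {p : Fin 4 × Fin 4}

lemma sum_sub_smul_signedAmpSq_eq_zero (hαβ : ∑ i, α i = ∑ j, β j) (x y : Q2 → ℂ) :
    ∑ i, ∑ j, (α i - β j) • signedAmpSq x y i j = 0 := by
  have weighted_sum := sum_sub_mul_eq_of_row_sum_eq_of_col_sum_eq (row_sum_signedAmpSq x y)
    (col_sum_signedAmpSq x y) (fun i => (α i : ℂ)) (fun j => (β j : ℂ))
  simpa only [← ofReal_sub, ← ofReal_sum, ← real_smul, hαβ, sub_self, ofReal_zero, zero_mul]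
    using weighted_sum

lemma sum_mul_norm_bellAmp_sq_nonneg (hαβ : ∑ i, α i = ∑ j, β j)
    (hW : ∀ i j, (i, j) ≠ p → |α i - β j| ≤ W i j) (hp : -|α p.1 - β p.2| ≤ W p.1 p.2)
    (x y : Q2 → ℂ) : 0 ≤ ∑ i, ∑ j, W i j * ‖bellAmp i j x y‖ ^ 2 := by
  have relation := sum_sub_smul_signedAmpSq_eq_zero hαβ x y
  simp only [← norm_signedAmpSq]
  rw [← Fintype.sum_prod_type'] at relation ⊢
  exact sum_mul_norm_nonneg_of_sum_smul_eq_zero relation p (fun k hk => hW k.1 k.2 hk) hp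

theorem stmt6_general (hαβ : ∑ i, α i = ∑ j, β j)
    (hW : ∀ i j, (i, j) ≠ p → |α i - β j| ≤ W i j) (hp : -|α p.1 - β p.2| ≤ W p.1 p.2)
    (ρ : M16) (hρ : SepAB ρ) :
    0 ≤ ((∑ i, ∑ j, (W i j : ℂ) • (BellProj i ⊗ₖ BellProj j)) * ρ).trace := by
  obtain ⟨n, x, y, rfl⟩ := hρ.exists_eq_sum_pureMat
  rw [Finset.mul_sum, trace_sum]
  refine Finset.sum_nonneg fun k _ => ?_
  rw [trace_sum_smul_bellProj_mul_pureMat]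
  exact zero_le_real.2 (sum_mul_norm_bellAmp_sq_nonneg hαβ hW hp (x k) (y k))

end Weights

lemma abs_single_sub_single_le_W2 (i j : Fin 4) (hij : (i, j) ≠ (0, 3)) :
    |(Pi.single 0 1 : Fin 4 → ℝ) i - (Pi.single 2 1 : Fin 4 → ℝ) j| ≤ W2 i j := by
  fin_cases i <;> fin_cases j <;> simp [W2] at hij ⊢

/-- STATEMENT: `Z_{w,2} = Σ_{ij} [W2]_{ij} Π_i⊗Π_j` is an entanglement witness for
the partition A = (A',A''), B = (B',B''): `tr(Z_{w,2} ρ) ≥ 0` for every matrix `ρ`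
separable across this partition. -/
theorem stmt6 (ρ : M16) (hρ : SepAB ρ) :
    0 ≤ ((∑ i, ∑ j, (W2 i j : ℂ) • (BellProj i ⊗ₖ BellProj j)) * ρ).trace := by
  refine stmt6_general (α := Pi.single 0 1) (β := Pi.single 2 1) (p := (0, 3)) ?_
    abs_single_sub_single_le_W2 ?_ ρ hρ <;> simp [W2]

end Paper
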